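/- If A is a set of positive integers with upper Banach density d*(A) > α for some 0 < α < 1, and t ≥ 2 is an integer, then the increasing enumeration b_1 < b_2 < ... of the product set B = A·A satisfies b_{n+t} - b_n ≤ 25·t²·α^{-4} for infinitely many n. -/

import Mathlib

/-- The upper Banach density of a set of natural numbers. -/
noncomputable def upperBanachDensity (A : Set ℕ) : ℝ :=
  Filter.limsup
    (fun K : ℕ => ⨆ x : ℕ, (Nat.card (A ∩ Set.Ioc x (x + K) : Set ℕ) : ℝ) / K)
    Filter.atTop

open Classical in
/-- The elements of `A` in `(x, x + K]`. -/
noncomputable def win (A : Set ℕ) (x K : ℕ) : Finset ℕ :=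
  (Finset.Ioc x (x + K)).filter (· ∈ A)

lemma mem_win {A : Set ℕ} {x K a : ℕ} : a ∈ win A x K ↔ (x < a ∧ a ≤ x + K) ∧ a ∈ A := by
  simp [win]

lemma natCard_win (A : Set ℕ) (x K : ℕ) :
    Nat.card (A ∩ Set.Ioc x (x + K) : Set ℕ) = (win A x K).card := by
  have h : (A ∩ Set.Ioc x (x + K) : Set ℕ) = ((win A x K : Finset ℕ) : Set ℕ) := by
    ext a
    simp only [Set.mem_inter_iff, Set.mem_Ioc, Finset.mem_coe, mem_win]
    tauto
  rw [h, Nat.card_coe_set_eq, Set.ncard_coe_finset]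

lemma win_add (A : Set ℕ) (x K L : ℕ) :
    (win A x (K + L)).card ≤ (win A x K).card + (win A (x + K) L).card := by
  refine le_trans (Finset.card_le_card ?_) (Finset.card_union_le _ _)
  intro a ha
  rw [Finset.mem_union]
  simp only [mem_win] at ha ⊢
  by_cases h : a ≤ x + K
  · exact Or.inl ⟨⟨ha.1.1, h⟩, ha.2⟩
  · exact Or.inr ⟨⟨by omega, by omega⟩, ha.2⟩

lemma win_le (A : Set ℕ) (x K : ℕ) : (win A x K).card ≤ K := by
  classical
  refine le_trans (Finset.card_filter_le _ _) ?_
  simp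

lemma win_mono (A : Set ℕ) (x : ℕ) {K K' : ℕ} (h : K ≤ K') :
    (win A x K).card ≤ (win A x K').card := by
  apply Finset.card_le_card
  intro a ha
  rw [mem_win] at *
  exact ⟨⟨ha.1.1, by omega⟩, ha.2⟩

lemma win_blocks (A : Set ℕ) (α : ℝ) (L M : ℕ)
    (h : ∀ x, M ≤ x → ((win A x L).card : ℝ) ≤ α * L) (y : ℕ) (hy : M ≤ y) (q : ℕ) :
    ((win A y (q * L)).card : ℝ) ≤ α * L * q := by
  induction q with
  | zero =>
    have := win_le A y (0 * L)
    have h0 : (win A y (0 * L)).card = 0 := by omega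
    rw [h0]; simp
  | succ q ih =>
    have h1 := win_add A y (q * L) L
    have h2 := h (y + q * L) (by omega)
    have h3 : (q + 1) * L = q * L + L := by ring
    rw [h3]
    have h1' : ((win A y (q * L + L)).card : ℝ) ≤
      (win A y (q * L)).card + (win A (y + q * L) L).card := by exact_mod_cast h1
    push_cast
    linarith

lemma exists_window (A : Set ℕ) (α : ℝ) (hα : 0 < α) (hd : α < upperBanachDensity A)
    (L M : ℕ) (hL : 0 < L) : ∃ x, M ≤ x ∧ α * L < (win A x L).card := by
  by_contra hcon
  push Not at hcon
  obtain ⟨β, hβ1, hβ2⟩ := exists_between hd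
  have hfr : ∃ᶠ K : ℕ in Filter.atTop,
      β < ⨆ x : ℕ, (Nat.card (A ∩ Set.Ioc x (x + K) : Set ℕ) : ℝ) / K := by
    apply Filter.frequently_lt_of_lt_limsup _ hβ2
    apply Filter.IsCoboundedUnder.of_frequently_ge (a := 0)
    apply Filter.Frequently.of_forall
    intro K
    exact Real.iSup_nonneg fun x => by positivity
  obtain ⟨K₀, hK₀⟩ := exists_nat_gt ((M + α * L) / (β - α))
  obtain ⟨K, hK, hKK⟩ := (hfr.and_eventually (Filter.eventually_ge_atTop (K₀ + 1))).exists
  obtain ⟨x, hx⟩ := exists_lt_of_lt_ciSup hK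
  rw [natCard_win] at hx
  have hKpos : (0 : ℝ) < K := by
    have : 0 < K := by omega
    exact_mod_cast this
  rw [lt_div_iff₀ hKpos] at hx
  have hKK' : (K₀ : ℝ) ≤ K := by
    have : K₀ ≤ K := by omega
    exact_mod_cast this
  have hpos : 0 < β - α := by linarith
  rw [div_lt_iff₀ hpos] at hK₀
  have hdm := Nat.div_add_mod K L
  have hml := Nat.mod_lt K hL
  have e1 : K ≤ M + (K / L + 1) * L := by nlinarith
  have h1 := (win_mono A x e1).trans (win_add A x M _)
  have h2 := win_le A x M
  have h3 := win_blocks A α L M hcon (x + M) (by omega) (K / L + 1)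
  have h4 : ((win A x K).card : ℝ) ≤ M + (win A (x + M) ((K / L + 1) * L)).card := by
    have : (win A x K).card ≤ M + (win A (x + M) ((K / L + 1) * L)).card := by omega
    exact_mod_cast this
  have h5 : (L : ℝ) * ((K / L : ℕ) : ℝ) ≤ K := by
    have : L * (K / L) ≤ K := by omega
    exact_mod_cast this
  have h6 := mul_le_mul_of_nonneg_left h5 hα.le
  have h7 := mul_le_mul_of_nonneg_right hKK' hpos.le
  push_cast at h3
  nlinarith

lemma sum_prod_eq {a b c d : ℕ} (hs : a + b = c + d) (hp : a * b = c * d) :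
    (a = c ∧ b = d) ∨ (a = d ∧ b = c) := by
  have h : ((a : ℤ) - c) * (a - d) = 0 := by
    have hs' : (a : ℤ) + b = c + d := by exact_mod_cast hs
    have hp' : (a : ℤ) * b = c * d := by exact_mod_cast hp
    linear_combination (a : ℤ) * hs' - hp'
  rcases mul_eq_zero.1 h with h | h
  · left; omega
  · right; omega

theorem stmt3 (α : ℝ) (hα0 : 0 < α) (hα1 : α < 1) (t : ℕ) (ht : 2 ≤ t)
    (A : Set ℕ) (hA : 0 ∉ A) (hd : α < upperBanachDensity A)
    (b : ℕ → ℕ) (hb : StrictMono b)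
    (hrange : ∀ m, m ∈ Set.range b ↔ ∃ a ∈ A, ∃ a' ∈ A, m = a * a') :
    ∀ N : ℕ, ∃ n, N ≤ n ∧ ((b (n + t) : ℝ) - b n) ≤ 25 * t ^ 2 / α ^ 4 := by
  classical
  intro N
  have htR : (2 : ℝ) ≤ t := by exact_mod_cast ht
  obtain ⟨u, hu⟩ : ∃ u : ℝ, u = t / α ^ 2 := ⟨_, rfl⟩
  have hα2 : 0 < α ^ 2 := by positivity
  have hua : u * α ^ 2 = t := by rw [hu]; field_simp
  have hu2 : 2 ≤ u := by
    have : α ^ 2 ≤ 1 := by nlinarith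
    have hu0 : 0 ≤ u := by rw [hu]; positivity
    nlinarith
  set L := ⌈4 * u⌉₊ with hLdef
  have hL1 : 4 * u ≤ L := Nat.le_ceil _
  have hL2 : (L : ℝ) < 4 * u + 1 := Nat.ceil_lt_add_one (by linarith)
  have hLpos : 0 < L := by
    have : (0 : ℝ) < L := by linarith
    exact_mod_cast this
  obtain ⟨x, hxM, hx⟩ := exists_window A α hα0 hd L (b N) hLpos
  set S := win A x L with hS
  have hLR : (0 : ℝ) < L := by exact_mod_cast hLpos
  have hcardR : ((2 * L : ℕ) : ℝ) * ((2 * t : ℕ) : ℝ) < (S.card : ℝ) * S.card := by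
    have h0 : 0 < α * L := by positivity
    have h1 : (α * L) * (α * L) < (S.card : ℝ) * S.card := by nlinarith
    have h2 : 4 * (t : ℝ) ≤ L * α ^ 2 := by nlinarith
    have h3 := mul_le_mul_of_nonneg_left h2 hLR.le
    push_cast
    nlinarith
  have hcard : (2 * L) * (2 * t) < S.card * S.card := by exact_mod_cast hcardR
  obtain ⟨s, hs, hF⟩ := Finset.exists_lt_card_fiber_of_mul_lt_card_of_maps_to
    (s := S ×ˢ S) (t := Finset.Ioc (2 * x) (2 * x + 2 * L)) (f := fun p : ℕ × ℕ => p.1 + p.2)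
    (n := 2 * t) (by
      intro p hp
      rw [Finset.mem_product] at hp
      have h1 := mem_win.1 hp.1
      have h2 := mem_win.1 hp.2
      rw [Finset.mem_Ioc]
      omega) (by simpa [Finset.card_product] using hcard)
  set F := (S ×ˢ S).filter (fun p : ℕ × ℕ => p.1 + p.2 = s) with hFdef
  have hFm : ∀ p ∈ F, p.1 ∈ S ∧ p.2 ∈ S ∧ p.1 + p.2 = s := by
    intro p hp
    rw [hFdef, Finset.mem_filter, Finset.mem_product] at hp
    exact ⟨hp.1.1, hp.1.2, hp.2⟩
  set T := F.image (fun p : ℕ × ℕ => p.1 * p.2) with hT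
  have hTcard : t < T.card := by
    have : F.card ≤ 2 * T.card := by
      apply Finset.card_le_mul_card_image
      intro m hm
      obtain ⟨p, hp, hpm⟩ := Finset.mem_image.1 hm
      refine le_trans (Finset.card_le_card (t := {p, p.swap}) ?_) Finset.card_le_two
      intro r hr
      rw [Finset.mem_filter] at hr
      have e := sum_prod_eq ((hFm r hr.1).2.2.trans (hFm p hp).2.2.symm) (hr.2.trans hpm.symm)
      rw [Finset.mem_insert, Finset.mem_singleton]
      rcases e with e | e
      · exact Or.inl (Prod.ext e.1 e.2)
      · exact Or.inr (Prod.ext e.1 e.2)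
    omega
  -- the index set
  have hTr : ∀ m ∈ T, ∃ k, b k = m := by
    intro m hm
    obtain ⟨p, hp, hpm⟩ := Finset.mem_image.1 hm
    obtain ⟨h1, h2, -⟩ := hFm p hp
    exact (hrange m).2 ⟨p.1, (mem_win.1 h1).2, p.2, (mem_win.1 h2).2, hpm.symm⟩
  set J := T.preimage b hb.injective.injOn with hJ
  have hJc : J.card = T.card := by
    rw [← Finset.card_image_of_injective J hb.injective]
    congr 1
    ext m
    simp only [hJ, Finset.mem_image, Finset.mem_preimage]
    constructor
    · rintro ⟨k, hk, rfl⟩; exact hk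
    · intro hm
      obtain ⟨k, rfl⟩ := hTr m hm
      exact ⟨k, hm, rfl⟩
  have hJne : J.Nonempty := Finset.card_pos.1 (by omega)
  have hmax : J.min' hJne + t ≤ J.max' hJne := by
    have : J ⊆ Finset.Icc (J.min' hJne) (J.max' hJne) := by
      intro k hk
      exact Finset.mem_Icc.2 ⟨J.min'_le k hk, J.le_max' k hk⟩
    have := Finset.card_le_card this
    rw [Nat.card_Icc] at this
    omega
  have hmin_mem : b (J.min' hJne) ∈ T := Finset.mem_preimage.1 (J.min'_mem hJne)
  have hmax_mem : b (J.max' hJne) ∈ T := Finset.mem_preimage.1 (J.max'_mem hJne)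
  refine ⟨J.min' hJne, ?_, ?_⟩
  · obtain ⟨p, hp, hpm⟩ := Finset.mem_image.1 hmin_mem
    obtain ⟨h1, h2, -⟩ := hFm p hp
    have h1 := (mem_win.1 h1).1
    have h2 := (mem_win.1 h2).1
    apply hb.le_iff_le.1
    rw [← hpm]
    have : 1 ≤ p.2 := by omega
    nlinarith
  · have hle : (b (J.min' hJne + t) : ℝ) ≤ b (J.max' hJne) := by
      exact_mod_cast hb.monotone hmax
    obtain ⟨p, hp, hpm⟩ := Finset.mem_image.1 hmin_mem
    obtain ⟨r, hr, hrm⟩ := Finset.mem_image.1 hmax_mem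
    have key : ((b (J.max' hJne) : ℝ)) - b (J.min' hJne) ≤ L * L - 1 := by
      rw [← hpm, ← hrm]
      obtain ⟨h1, h2, h3⟩ := hFm p hp
      obtain ⟨h4, h5, h6⟩ := hFm r hr
      have h1 := (mem_win.1 h1).1
      have h2 := (mem_win.1 h2).1
      have h4 := (mem_win.1 h4).1
      have h5 := (mem_win.1 h5).1
      obtain ⟨i, hi⟩ := Nat.exists_eq_add_of_lt h1.1
      obtain ⟨j, hj⟩ := Nat.exists_eq_add_of_lt h2.1
      obtain ⟨k, hk⟩ := Nat.exists_eq_add_of_lt h4.1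
      obtain ⟨l, hl⟩ := Nat.exists_eq_add_of_lt h5.1
      have hsum : (i : ℝ) + j = k + l := by
        have : i + j = k + l := by omega
        exact_mod_cast this
      have hkl : ((k : ℝ) + 1) * (l + 1) ≤ L * L := by
        have : (k + 1) * (l + 1) ≤ L * L := Nat.mul_le_mul (by omega) (by omega)
        exact_mod_cast this
      have hi0 : (0 : ℝ) ≤ i := Nat.cast_nonneg _
      have hj0 : (0 : ℝ) ≤ j := Nat.cast_nonneg _
      have hij := mul_nonneg hi0 hj0
      have hxs : (x : ℝ) * (i + j) = x * (k + l) := by rw [hsum]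
      simp only [hi, hj, hk, hl]
      push_cast
      nlinarith
    have hfin : (25 * t ^ 2 / α ^ 4 : ℝ) = 25 * u ^ 2 := by
      rw [hu]; field_simp
    rw [hfin]
    nlinarith
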